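/- arXiv:2408.10265 — 4 statements merged into one kernel-verified Lean document; each statement's English description precedes it below -/
import Mathlib

section
/- Let N, D ∈ ℕ with D ≥ 1, let σ > 0, and let w₁,…,w_D be independent random vectors in ℝ^N, each having independent components distributed as real Gaussians with mean 0 and variance σ⁻². For x ∈ ℝ^N define the random feature vector φ(x) ∈ ℝ^{2D} whose entries are φ(x)_{2j−1} = (1/√D)·cos(⟨w_j, x⟩) and φ(x)_{2j} = (1/√D)·sin(⟨w_j, x⟩) for j = 1,…,D. Then for all x, y ∈ ℝ^N, the expected Euclidean inner product satisfies E[⟨φ(x), φ(y)⟩] = exp(−‖x−y‖²/(2σ²)), i.e. the quantum feature map built from these random Fourier features is an unbiased estimator of the RBF (Gaussian) kernel K_RBF(x,y) = exp(−‖x−y‖²/(2σ²)). -/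
open MeasureTheory ProbabilityTheory

/-- The random Fourier feature vector `φ(x) ∈ ℝ^{2D}` built from frequencies
`w = (w₁,…,w_D)`: indexing the `2D` coordinates by pairs `(j, 0)` and `(j, 1)`,
the entries are `(1/√D)·cos(⟨w_j, x⟩)` and `(1/√D)·sin(⟨w_j, x⟩)`. -/
noncomputable def rbfFeature (N D : ℕ) (w : Fin D → Fin N → ℝ) (x : Fin N → ℝ) :
    Fin D × Fin 2 → ℝ := fun p =>
  if p.2 = 0 then (1 / Real.sqrt D) * Real.cos (∑ k, w p.1 k * x k)
  else (1 / Real.sqrt D) * Real.sin (∑ k, w p.1 k * x k)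

/-- Characteristic-function computation for a single frequency. -/
lemma rbf_integral_cos (N : ℕ) (v : NNReal) (z : Fin N → ℝ) :
    ∫ w : Fin N → ℝ, Real.cos (∑ k, w k * z k)
        ∂(Measure.pi fun _ : Fin N => gaussianReal 0 v)
      = Real.exp (-(v * ∑ k, z k ^ 2) / 2) := by
  have h : ∫ w : Fin N → ℝ, Complex.exp (((∑ k, w k * z k : ℝ) : ℂ) * Complex.I)
        ∂(Measure.pi fun _ : Fin N => gaussianReal 0 v)
      = ((Real.exp (-(v * ∑ k, z k ^ 2) / 2) : ℝ) : ℂ) := by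
    have h1 : ∀ w : Fin N → ℝ, Complex.exp (((∑ k, w k * z k : ℝ) : ℂ) * Complex.I)
        = ∏ k, Complex.exp ((z k : ℂ) * (w k : ℂ) * Complex.I) := by
      intro w
      rw [← Complex.exp_sum]
      push_cast
      rw [Finset.sum_mul]
      simp only [mul_comm]
    simp_rw [h1]
    rw [integral_fintype_prod_eq_prod
      (f := fun k (t : ℝ) => Complex.exp ((z k : ℂ) * (t : ℂ) * Complex.I))]
    simp_rw [← charFun_apply_real, charFun_gaussianReal]
    rw [← Complex.exp_sum]
    push_cast
    congr 1
    rw [Finset.mul_sum, ← Finset.sum_neg_distrib, Finset.sum_div]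
    refine Finset.sum_congr rfl fun k _ => ?_
    ring
  have hi : Integrable (fun w : Fin N → ℝ =>
      Complex.exp (((∑ k, w k * z k : ℝ) : ℂ) * Complex.I))
      (Measure.pi fun _ : Fin N => gaussianReal 0 v) := by
    refine Integrable.of_bound (C := 1) (Measurable.aestronglyMeasurable (by fun_prop)) (Filter.Eventually.of_forall fun w => ?_)
    rw [Complex.norm_exp_ofReal_mul_I]
  have h2 := congrArg Complex.re h
  rw [Complex.ofReal_re] at h2
  rw [← h2]
  have h3 := integral_re (𝕜 := ℂ) hi
  simp only [RCLike.re_to_complex, Complex.exp_ofReal_mul_I_re] at h3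
  exact h3

/-- Random Fourier features with independent Gaussian frequencies (each `w_j` having
independent `N(0, σ⁻²)` components, joint law the product measure) give an unbiased
estimator of the RBF kernel: for all `x, y ∈ ℝ^N`,
`E[⟨φ(x), φ(y)⟩] = exp(−‖x−y‖²/(2σ²))`. -/
theorem rbfFeature_expectation_inner (N D : ℕ) (hD : 1 ≤ D) (σ : ℝ) (hσ : 0 < σ)
    (x y : Fin N → ℝ) :
    ∫ w : Fin D → Fin N → ℝ,
        (∑ p : Fin D × Fin 2, rbfFeature N D w x p * rbfFeature N D w y p)
        ∂(Measure.pi fun _ : Fin D =>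
            Measure.pi fun _ : Fin N => gaussianReal 0 ((σ ^ 2).toNNReal)⁻¹)
      = Real.exp (-(∑ k, (x k - y k) ^ 2) / (2 * σ ^ 2)) := by
  have hs : ∀ w : Fin D → Fin N → ℝ,
      (∑ p : Fin D × Fin 2, rbfFeature N D w x p * rbfFeature N D w y p)
      = ∑ j : Fin D, (1 / (D : ℝ)) * Real.cos (∑ k, w j k * (x k - y k)) := by
    intro w
    rw [Fintype.sum_prod_type]
    refine Finset.sum_congr rfl fun j _ => ?_
    have hd : (1 / Real.sqrt D) * (1 / Real.sqrt D) = 1 / (D : ℝ) := by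
      rw [div_mul_div_comm, Real.mul_self_sqrt (Nat.cast_nonneg D), one_mul]
    simp only [Fin.sum_univ_two, rbfFeature, if_true, one_ne_zero, if_false, mul_sub,
      Finset.sum_sub_distrib, Real.cos_sub]
    rw [← hd]
    ring
  simp_rw [hs]
  rw [integral_finsetSum]
  · have hj : ∀ j : Fin D, ∫ w : Fin D → Fin N → ℝ,
        (1 / (D : ℝ)) * Real.cos (∑ k, w j k * (x k - y k))
        ∂(Measure.pi fun _ : Fin D =>
            Measure.pi fun _ : Fin N => gaussianReal 0 ((σ ^ 2).toNNReal)⁻¹)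
        = (1 / (D : ℝ)) * Real.exp (-(∑ k, (x k - y k) ^ 2) / (2 * σ ^ 2)) := by
      intro j
      rw [integral_const_mul]
      congr 1
      have hm := integral_comp_eval (μ := fun _ : Fin D =>
            Measure.pi fun _ : Fin N => gaussianReal 0 ((σ ^ 2).toNNReal)⁻¹) (i := j)
            (f := fun u : Fin N → ℝ => Real.cos (∑ k, u k * (x k - y k)))
            (Measurable.aestronglyMeasurable (by fun_prop))
      rw [hm, rbf_integral_cos]
      congr 1
      rw [NNReal.coe_inv, Real.coe_toNNReal _ (sq_nonneg σ)]
      field_simp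
    simp_rw [hj]
    have : (D : ℝ) ≠ 0 := by positivity
    simp
    field_simp
  · intro j _
    refine Integrable.of_bound (C := 1 / (D : ℝ)) (Measurable.aestronglyMeasurable (by fun_prop))
      (Filter.Eventually.of_forall fun w => ?_)
    rw [norm_mul, Real.norm_of_nonneg (by positivity)]
    exact mul_le_of_le_one_right (by positivity) (Real.abs_cos_le_one _)
end

section
/- Let N ∈ ℕ, let γ > 0, and let w = (w₁,…,w_N) be a random vector in ℝ^N whose components are independent, each distributed according to the centered Cauchy distribution with scale γ. Then for any fixed v ∈ ℝ^N with v ≠ 0, the real random variable ⟨w, v⟩ = Σ_{k=1}^N w_k v_k is distributed according to the centered Cauchy distribution with scale γ·‖v‖₁, where ‖v‖₁ = Σ_{k=1}^N |v_k|; i.e., the pushforward of the joint law of w under w ↦ ⟨w, v⟩ has density s ↦ (γ‖v‖₁)/(π(s² + γ²‖v‖₁²)) with respect to Lebesgue measure. -/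
open MeasureTheory

/-- The centered Cauchy distribution with scale parameter `γ`: the measure on `ℝ`
with density `s ↦ γ/(π(s² + γ²))` with respect to Lebesgue measure. -/
noncomputable def cauchyMeasure (γ : ℝ) : Measure ℝ :=
  volume.withDensity fun s => ENNReal.ofReal (γ / (Real.pi * (s ^ 2 + γ ^ 2)))

section CauchyAux

open Complex FourierTransform

lemma cauchyAux_integrable (γ : ℝ) (hγ : 0 < γ) :
    Integrable (fun s : ℝ => γ / (Real.pi * (s ^ 2 + γ ^ 2))) := by
  have h := (integrable_inv_one_add_sq.comp_div hγ.ne').const_mul ((Real.pi * γ)⁻¹)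
  refine h.congr (Filter.Eventually.of_forall fun s => ?_)
  have h1 : s ^ 2 + γ ^ 2 ≠ 0 := by positivity
  have h2 : 1 + (s / γ) ^ 2 ≠ 0 := by positivity
  have := Real.pi_pos.ne'
  have hg := hγ.ne'
  simp only
  field_simp
  ring

lemma cauchyAux_finite (γ : ℝ) (hγ : 0 < γ) : IsFiniteMeasure (cauchyMeasure γ) :=
  isFiniteMeasure_withDensity_ofReal (cauchyAux_integrable γ hγ).2

lemma cauchyAux_eqOn_Iic (γ ξ : ℝ) : Set.EqOn
    (fun v : ℝ => cexp ((2 * Real.pi * γ - 2 * Real.pi * ξ * I) * v))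
    (fun v : ℝ => cexp (↑(-2 * Real.pi * v * ξ) * I) • cexp (-(2 * Real.pi * γ * |v| : ℝ)))
    (Set.Iic 0) := by
  intro v hv
  have : |v| = -v := abs_of_nonpos hv
  simp only [this, smul_eq_mul, ← Complex.exp_add]
  congr 1
  push_cast
  ring

lemma cauchyAux_eqOn_Ioi (γ ξ : ℝ) : Set.EqOn
    (fun v : ℝ => cexp ((-(2 * Real.pi * γ) - 2 * Real.pi * ξ * I) * v))
    (fun v : ℝ => cexp (↑(-2 * Real.pi * v * ξ) * I) • cexp (-(2 * Real.pi * γ * |v| : ℝ)))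
    (Set.Ioi 0) := by
  intro v hv
  have : |v| = v := abs_of_pos hv
  simp only [this, smul_eq_mul, ← Complex.exp_add]
  congr 1
  push_cast
  ring

lemma cauchyAux_on_Iic (γ : ℝ) (hγ : 0 < γ) (ξ : ℝ) : IntegrableOn
    (fun v : ℝ => cexp (↑(-2 * Real.pi * v * ξ) * I) • cexp (-(2 * Real.pi * γ * |v| : ℝ)))
    (Set.Iic 0) :=
  (integrableOn_exp_mul_complex_Iic (a := 2 * Real.pi * γ - 2 * Real.pi * ξ * I)
    (by simp; positivity) 0).congr_fun (cauchyAux_eqOn_Iic γ ξ) measurableSet_Iic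

lemma cauchyAux_on_Ioi (γ : ℝ) (hγ : 0 < γ) (ξ : ℝ) : IntegrableOn
    (fun v : ℝ => cexp (↑(-2 * Real.pi * v * ξ) * I) • cexp (-(2 * Real.pi * γ * |v| : ℝ)))
    (Set.Ioi 0) :=
  (integrableOn_exp_mul_complex_Ioi (a := -(2 * Real.pi * γ) - 2 * Real.pi * ξ * I)
    (by simp; positivity) 0).congr_fun (cauchyAux_eqOn_Ioi γ ξ) measurableSet_Ioi

lemma cauchyAux_fourier (γ : ℝ) (hγ : 0 < γ) :
    𝓕 (fun v : ℝ => cexp (-(2 * Real.pi * γ * |v| : ℝ)))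
      = fun s : ℝ => ((γ / (Real.pi * (s ^ 2 + γ ^ 2)) : ℝ) : ℂ) := by
  ext ξ
  rw [Real.fourier_real_eq_integral_exp_smul,
    ← intervalIntegral.integral_Iic_add_Ioi (b := 0) (cauchyAux_on_Iic γ hγ ξ)
      (cauchyAux_on_Ioi γ hγ ξ),
    ← setIntegral_congr_fun measurableSet_Iic (cauchyAux_eqOn_Iic γ ξ),
    ← setIntegral_congr_fun measurableSet_Ioi (cauchyAux_eqOn_Ioi γ ξ),
    integral_exp_mul_complex_Iic (by simp; positivity),
    integral_exp_mul_complex_Ioi (by simp; positivity)]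
  have hpi : (Real.pi : ℂ) ≠ 0 := by exact_mod_cast Real.pi_pos.ne'
  have e1 : (2 * Real.pi * γ - 2 * Real.pi * ξ * I : ℂ) ≠ 0 := by
    intro h
    have := congrArg Complex.re h
    simp at this
    exact hγ.ne' this
  have e2 : (-(2 * Real.pi * γ) - 2 * Real.pi * ξ * I : ℂ) ≠ 0 := by
    intro h
    have := congrArg Complex.re h
    simp at this
    exact hγ.ne' this
  have e3 : (ξ ^ 2 + γ ^ 2 : ℂ) ≠ 0 := by
    have : ξ ^ 2 + γ ^ 2 ≠ 0 := by positivity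
    exact_mod_cast this
  push_cast
  simp only [mul_zero, Complex.exp_zero]
  rw [div_add_div _ _ e1 e2, div_eq_div_iff (mul_ne_zero e1 e2) (mul_ne_zero hpi e3)]
  ring_nf
  simp only [I_sq]
  ring

lemma cauchyAux_charFun (γ : ℝ) (hγ : 0 < γ) (t : ℝ) :
    ∫ x, cexp (t * x * I) ∂(cauchyMeasure γ) = cexp (-(γ * |t| : ℝ)) := by
  have hint : Integrable (fun v : ℝ => cexp (-(2 * Real.pi * γ * |v| : ℝ))) := by
    have h1 := cauchyAux_on_Iic γ hγ 0
    have h2 := cauchyAux_on_Ioi γ hγ 0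
    have := h1.union h2
    rw [Set.Iic_union_Ioi, integrableOn_univ] at this
    simpa using this
  have hF : Integrable (𝓕 (fun v : ℝ => cexp (-(2 * Real.pi * γ * |v| : ℝ)))) := by
    rw [cauchyAux_fourier γ hγ]
    exact (cauchyAux_integrable γ hγ).ofReal
  have hinv := congrFun (Continuous.fourierInv_fourier_eq (by fun_prop) hint hF)
    (t / (2 * Real.pi))
  rw [cauchyAux_fourier γ hγ, Real.fourierInv_eq'] at hinv
  unfold cauchyMeasure
  rw [integral_withDensity_eq_integral_toReal_smul (by fun_prop) (by simp)]
  have hpi := Real.pi_pos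
  have hr : 2 * Real.pi * γ * |t / (2 * Real.pi)| = γ * |t| := by
    rw [abs_div, abs_of_pos (by positivity : 0 < 2 * Real.pi)]
    field_simp
  simp only [hr] at hinv
  rw [← hinv]
  refine integral_congr_ae (Filter.Eventually.of_forall fun x => ?_)
  simp only
  rw [ENNReal.toReal_ofReal (by positivity), real_smul, smul_eq_mul, mul_comm]
  congr 3
  simp only [RCLike.inner_apply, conj_trivial]
  rw [← Complex.ofReal_mul]
  congr 1
  field_simp

end CauchyAux

/-- Closure of Cauchy distributions under linear transformations: if `w = (w₁,…,w_N)`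
has independent components each distributed as the centered Cauchy distribution with
scale `γ > 0` (joint law the product measure), then for any fixed `v ≠ 0` the
pushforward of this joint law under `w ↦ ⟨w, v⟩ = ∑ k, w k * v k` is the centered
Cauchy distribution with scale `γ·‖v‖₁`. -/
theorem map_pi_cauchy_inner (N : ℕ) (γ : ℝ) (hγ : 0 < γ) (v : Fin N → ℝ) (hv : v ≠ 0) :
    Measure.map (fun w : Fin N → ℝ => ∑ k, w k * v k)
        (Measure.pi fun _ : Fin N => cauchyMeasure γ)
      = cauchyMeasure (γ * ∑ k, |v k|) := by
  have hpos : 0 < γ * ∑ k, |v k| := by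
    obtain ⟨k, hk⟩ := Function.ne_iff.mp hv
    refine mul_pos hγ (Finset.sum_pos' (fun i _ => abs_nonneg _) ⟨k, Finset.mem_univ _, ?_⟩)
    exact abs_pos.mpr hk
  have := cauchyAux_finite γ hγ
  have := cauchyAux_finite _ hpos
  apply Measure.ext_of_charFun
  ext t
  rw [charFun_apply_real, charFun_apply_real, cauchyAux_charFun _ hpos,
    integral_map (Continuous.measurable (by fun_prop)).aemeasurable
      (Continuous.aestronglyMeasurable (by fun_prop))]
  have h : ∀ w : Fin N → ℝ, Complex.exp (t * ((∑ k, w k * v k : ℝ) : ℂ) * Complex.I)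
      = ∏ k, Complex.exp (((t * v k : ℝ) : ℂ) * (w k : ℂ) * Complex.I) := by
    intro w
    rw [← Complex.exp_sum]
    congr 1
    push_cast
    rw [Finset.mul_sum, Finset.sum_mul]
    exact Finset.sum_congr rfl fun k _ => by ring
  simp_rw [h]
  rw [integral_fintype_prod_eq_prod (𝕜 := ℂ)
    (f := fun k (x : ℝ) => Complex.exp (((t * v k : ℝ) : ℂ) * (x : ℂ) * Complex.I))]
  simp_rw [cauchyAux_charFun γ hγ]
  rw [← Complex.exp_sum]
  congr 1
  push_cast [abs_mul]
  rw [Finset.sum_neg_distrib, Finset.mul_sum, Finset.sum_mul]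
  congr 1
  exact Finset.sum_congr rfl fun k _ => by ring
end

section
/- Let N ∈ ℕ, let α > 0, and let w be a random vector in ℝ^N whose components are independent, each distributed according to the centered Cauchy distribution with scale α⁻¹. Then for every v ∈ ℝ^N, the expectation of cos(⟨w, v⟩) equals exp(−‖v‖₁/α), where ‖v‖₁ = Σ_{k=1}^N |v_k| is the ℓ¹ norm; i.e., ∫ cos(⟨w,v⟩) dP(w) = exp(−‖v‖₁/α). -/
open MeasureTheory

open scoped FourierTransform

lemma aux_decay {c : ℝ} (hc : 0 < c) (ξ : ℝ) :
    Integrable (fun x : ℝ => Complex.exp (((-2 * Real.pi * x * ξ : ℝ) : ℂ) * Complex.I)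
        * ((Real.exp (-c * |x|) : ℝ) : ℂ)) ∧
    ∫ x : ℝ, Complex.exp (((-2 * Real.pi * x * ξ : ℝ) : ℂ) * Complex.I)
        * ((Real.exp (-c * |x|) : ℝ) : ℂ)
      = ((2 * c / (c ^ 2 + (2 * Real.pi * ξ) ^ 2) : ℝ) : ℂ) := by
  set F := (fun x : ℝ => Complex.exp (((-2 * Real.pi * x * ξ : ℝ) : ℂ) * Complex.I)
        * ((Real.exp (-c * |x|) : ℝ) : ℂ)) with hF
  set a : ℂ := -c - 2 * Real.pi * ξ * Complex.I with ha
  set b : ℂ := c - 2 * Real.pi * ξ * Complex.I with hb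
  have har : a.re = -c := by simp [ha]
  have hbr : b.re = c := by simp [hb]
  have h1 : Set.EqOn (fun x : ℝ => Complex.exp (a * x)) F (Set.Ioi 0) := by
    intro x hx
    simp only [hF, Complex.ofReal_exp, ← Complex.exp_add]
    rw [abs_of_pos hx]
    congr 1
    simp only [ha]; push_cast; ring
  have h2 : Set.EqOn (fun x : ℝ => Complex.exp (b * x)) F (Set.Iic 0) := by
    intro x hx
    simp only [hF, Complex.ofReal_exp, ← Complex.exp_add]
    rw [abs_of_nonpos hx]
    congr 1
    simp only [hb]; push_cast; ring
  have i1 : IntegrableOn F (Set.Ioi 0) :=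
    (integrableOn_exp_mul_complex_Ioi (a := a) (by linarith) 0).congr_fun h1 measurableSet_Ioi
  have i2 : IntegrableOn F (Set.Iic 0) :=
    (integrableOn_exp_mul_complex_Iic (a := b) (by linarith) 0).congr_fun h2 measurableSet_Iic
  refine ⟨?_, ?_⟩
  · rw [← integrableOn_univ, ← Set.Iic_union_Ioi (a := (0 : ℝ))]
    exact i2.union i1
  · rw [← intervalIntegral.integral_Iic_add_Ioi i2 i1,
      ← setIntegral_congr_fun measurableSet_Ioi h1,
      ← setIntegral_congr_fun measurableSet_Iic h2,
      integral_exp_mul_complex_Ioi (by linarith), integral_exp_mul_complex_Iic (by linarith)]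
    have ha0 : a ≠ 0 := fun h => by rw [h] at har; simp at har; linarith
    have hb0 : b ≠ 0 := fun h => by rw [h] at hbr; simp at hbr; linarith
    have hab : -(a * b) = ((c ^ 2 + (2 * Real.pi * ξ) ^ 2 : ℝ) : ℂ) := by
      simp only [ha, hb]; push_cast; ring_nf; simp
    have hs : a - b = -2 * c := by simp only [ha, hb]; ring
    rw [Complex.ofReal_div, ← hab]
    simp only [Complex.ofReal_zero, mul_zero, Complex.exp_zero]
    push_cast
    field_simp
    linear_combination hs

lemma aux_integrable {γ : ℝ} (hγ : 0 < γ) :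
    Integrable (fun s : ℝ => γ / (Real.pi * (s ^ 2 + γ ^ 2))) := by
  have := (integrable_inv_one_add_sq.comp_div hγ.ne').const_mul (Real.pi⁻¹ * γ⁻¹)
  refine this.congr (Filter.Eventually.of_forall fun s => ?_)
  have := Real.pi_pos
  have : s ^ 2 + γ ^ 2 ≠ 0 := by positivity
  simp only
  have : 1 + (s / γ) ^ 2 = (s ^ 2 + γ ^ 2) / γ ^ 2 := by field_simp; ring
  rw [this]
  field_simp

lemma aux_fourier {γ : ℝ} (hγ : 0 < γ) :
    𝓕 (fun x : ℝ => ((Real.exp (-(2 * Real.pi * γ) * |x|) : ℝ) : ℂ))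
      = fun s : ℝ => ((γ / (Real.pi * (s ^ 2 + γ ^ 2)) : ℝ) : ℂ) := by
  have := Real.pi_pos
  ext s
  rw [Real.fourier_real_eq_integral_exp_smul]
  simp only [smul_eq_mul]
  rw [(aux_decay (c := 2 * Real.pi * γ) (by positivity) s).2]
  have : s ^ 2 + γ ^ 2 ≠ 0 := by positivity
  congr 1
  have h : (2 * Real.pi * γ) ^ 2 + (2 * Real.pi * s) ^ 2
    = 4 * Real.pi ^ 2 * (s ^ 2 + γ ^ 2) := by ring
  rw [h]
  field_simp
  norm_num

lemma aux_charFun {γ : ℝ} (hγ : 0 < γ) (t : ℝ) :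
    ∫ s : ℝ, Complex.exp ((s * t : ℝ) * Complex.I) ∂(cauchyMeasure γ)
      = ((Real.exp (-γ * |t|) : ℝ) : ℂ) := by
  have hpi := Real.pi_pos
  have hi := (aux_decay (c := 2 * Real.pi * γ) (by positivity) 0).1
  simp only [mul_zero, Complex.ofReal_zero, zero_mul, Complex.exp_zero, one_mul] at hi
  have hF := aux_fourier hγ
  have h := hi.fourierInv_fourier_eq (by rw [hF]; exact (aux_integrable hγ).ofReal)
    (v := t / (2 * Real.pi)) (by fun_prop)
  rw [hF, Real.fourierInv_eq'] at h
  rw [cauchyMeasure, integral_withDensity_eq_integral_toReal_smul (by fun_prop) (by simp)]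
  convert h using 1
  · refine integral_congr_ae (Filter.Eventually.of_forall fun s => ?_)
    have h0 : 0 ≤ γ / (Real.pi * (s ^ 2 + γ ^ 2)) := by positivity
    simp only [ENNReal.toReal_ofReal h0, Complex.real_smul, smul_eq_mul]
    rw [mul_comm]
    congr 4
    simp
    field_simp
  · congr 2
    rw [abs_div, abs_of_pos (by positivity : 0 < 2 * Real.pi)]
    field_simp

lemma aux_finite {γ : ℝ} (hγ : 0 < γ) : IsFiniteMeasure (cauchyMeasure γ) := by
  exact isFiniteMeasure_withDensity_ofReal (aux_integrable hγ).2

/-- Expected cosine of a Cauchy random projection: if `w ∈ ℝ^N` has independent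
components each distributed as the centered Cauchy distribution with scale `α⁻¹`
(joint law the product measure), then for every `v ∈ ℝ^N`,
`E[cos(⟨w, v⟩)] = exp(−‖v‖₁/α)`. -/
theorem integral_cos_cauchy_inner (N : ℕ) (α : ℝ) (hα : 0 < α) (v : Fin N → ℝ) :
    ∫ w : Fin N → ℝ, Real.cos (∑ k, w k * v k)
        ∂(Measure.pi fun _ : Fin N => cauchyMeasure α⁻¹)
      = Real.exp (-(∑ k, |v k|) / α) := by
  have hγ : 0 < α⁻¹ := inv_pos.mpr hα
  haveI := aux_finite hγ
  have key : ∫ w : Fin N → ℝ, Complex.exp ((∑ k, w k * v k : ℝ) * Complex.I)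
        ∂(Measure.pi fun _ : Fin N => cauchyMeasure α⁻¹)
      = ((Real.exp (-(∑ k, |v k|) / α) : ℝ) : ℂ) := by
    have h := integral_fintype_prod_eq_prod (𝕜 := ℂ) (μ := fun _ : Fin N => cauchyMeasure α⁻¹)
      (fun k s => Complex.exp ((s * v k : ℝ) * Complex.I))
    simp only [aux_charFun hγ, ← Complex.exp_sum, ← Complex.ofReal_prod, ← Real.exp_sum,
      ← Finset.sum_mul, ← Complex.ofReal_sum] at h
    rw [h, ← Finset.mul_sum]
    congr 2
    field_simp
  have hint : Integrable (fun w : Fin N → ℝ => Complex.exp ((∑ k, w k * v k : ℝ) * Complex.I))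
      (Measure.pi fun _ : Fin N => cauchyMeasure α⁻¹) := by
    refine Integrable.of_bound (C := 1) (Continuous.aestronglyMeasurable (by fun_prop)) ?_
    exact Filter.Eventually.of_forall fun w => (Complex.norm_exp_ofReal_mul_I _).le
  have h2 := integral_re hint
  rw [key] at h2
  simpa only [RCLike.re_to_complex, Complex.exp_ofReal_mul_I_re, Complex.ofReal_re] using h2
end

section
/- Let N, D ∈ ℕ with D ≥ 1 and let α > 0. Let w₁,…,w_D be independent random vectors in ℝ^N, each with independent components distributed according to the centered Cauchy distribution with scale α⁻¹, and let α₁,…,α_D be real random variables (phases), independent of everything else, each uniformly distributed on [0, 2π]. For x ∈ ℝ^N define the random feature vector φ(x) ∈ ℝ^{2D} with entries φ(x)_{2j−1} = (1/√D)·cos(⟨w_j, x⟩ + α_j) and φ(x)_{2j} = (1/√D)·sin(⟨w_j, x⟩ + α_j) for j = 1,…,D. Then for all x, y ∈ ℝ^N, the expected Euclidean inner product satisfies E[⟨φ(x), φ(y)⟩] = exp(−‖x−y‖₁/α), i.e. the quantum feature map built from these random Fourier features is an unbiased estimator of the Laplacian kernel K_L(x,y) = exp(−‖x−y‖₁/α).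 -/
open MeasureTheory

/-- The uniform distribution on `[0, 2π]`: Lebesgue measure restricted to `[0, 2π]`,
normalized to total mass `1`. -/
noncomputable def uniformPhase : Measure ℝ :=
  (ENNReal.ofReal (2 * Real.pi))⁻¹ • volume.restrict (Set.Icc 0 (2 * Real.pi))

/-- The phase-shifted random Fourier feature vector `φ(x) ∈ ℝ^{2D}` built from
frequencies `w = (w₁,…,w_D)` and phases `b = (b₁,…,b_D)`: indexing the `2D`
coordinates by pairs `(j, 0)` and `(j, 1)`, the entries are
`(1/√D)·cos(⟨w_j, x⟩ + b_j)` and `(1/√D)·sin(⟨w_j, x⟩ + b_j)`. -/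
noncomputable def lapFeature (N D : ℕ) (w : Fin D → Fin N → ℝ) (b : Fin D → ℝ)
    (x : Fin N → ℝ) : Fin D × Fin 2 → ℝ := fun p =>
  if p.2 = 0 then (1 / Real.sqrt D) * Real.cos ((∑ k, w p.1 k * x k) + b p.1)
  else (1 / Real.sqrt D) * Real.sin ((∑ k, w p.1 k * x k) + b p.1)

open FourierTransform in
lemma lapAux_fourier (γ : ℝ) (hγ : 0 < γ) :
    Integrable (fun v : ℝ => ((Real.exp (-(2 * Real.pi * γ) * |v|) : ℝ) : ℂ)) ∧
    (𝓕 (fun v : ℝ => ((Real.exp (-(2 * Real.pi * γ) * |v|) : ℝ) : ℂ)) : ℝ → ℂ) =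
      fun s => ((γ / (Real.pi * (s ^ 2 + γ ^ 2)) : ℝ) : ℂ) := by
  have hpi := Real.pi_pos
  have key : ∀ s : ℝ, IntegrableOn (fun v : ℝ => Complex.exp (↑(-2 * Real.pi * v * s) * Complex.I) •
        ((Real.exp (-(2 * Real.pi * γ) * |v|) : ℝ) : ℂ)) (Set.Iic 0) ∧
      IntegrableOn (fun v : ℝ => Complex.exp (↑(-2 * Real.pi * v * s) * Complex.I) •
        ((Real.exp (-(2 * Real.pi * γ) * |v|) : ℝ) : ℂ)) (Set.Ioi 0) ∧
      ∫ v : ℝ, Complex.exp (↑(-2 * Real.pi * v * s) * Complex.I) •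
        ((Real.exp (-(2 * Real.pi * γ) * |v|) : ℝ) : ℂ) =
        ((γ / (Real.pi * (s ^ 2 + γ ^ 2)) : ℝ) : ℂ) := by
    intro s
    set a : ℂ := 2 * Real.pi * (γ - s * Complex.I) with ha
    set b : ℂ := 2 * Real.pi * (-γ - s * Complex.I) with hb
    have hare : 0 < a.re := by simp [ha]; positivity
    have hbre : b.re < 0 := by simp [hb]; positivity
    have e1 : Set.EqOn (fun v : ℝ => Complex.exp (↑(-2 * Real.pi * v * s) * Complex.I) •
        ((Real.exp (-(2 * Real.pi * γ) * |v|) : ℝ) : ℂ)) (fun v : ℝ => Complex.exp (a * v))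
        (Set.Iic 0) := by
      intro v hv
      simp only [abs_of_nonpos (Set.mem_Iic.1 hv), smul_eq_mul, Complex.ofReal_exp,
        ← Complex.exp_add]
      congr 1
      push_cast
      rw [ha]; ring
    have e2 : Set.EqOn (fun v : ℝ => Complex.exp (↑(-2 * Real.pi * v * s) * Complex.I) •
        ((Real.exp (-(2 * Real.pi * γ) * |v|) : ℝ) : ℂ)) (fun v : ℝ => Complex.exp (b * v))
        (Set.Ioi 0) := by
      intro v hv
      simp only [abs_of_pos (Set.mem_Ioi.1 hv), smul_eq_mul, Complex.ofReal_exp,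
        ← Complex.exp_add]
      congr 1
      push_cast
      rw [hb]; ring
    have i1 := (integrableOn_congr_fun e1 measurableSet_Iic).2
      (integrableOn_exp_mul_complex_Iic hare 0)
    have i2 := (integrableOn_congr_fun e2 measurableSet_Ioi).2
      (integrableOn_exp_mul_complex_Ioi hbre 0)
    refine ⟨i1, i2, ?_⟩
    rw [← intervalIntegral.integral_Iic_add_Ioi i1 i2, setIntegral_congr_fun measurableSet_Iic e1,
      setIntegral_congr_fun measurableSet_Ioi e2, integral_exp_mul_complex_Iic hare,
      integral_exp_mul_complex_Ioi hbre]
    have ha0 : (γ - s * Complex.I : ℂ) ≠ 0 := by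
      intro h
      have := congrArg Complex.re h
      simp at this
      exact hγ.ne' this
    have hb0 : (-γ - s * Complex.I : ℂ) ≠ 0 := by
      intro h
      have := congrArg Complex.re h
      simp at this
      exact hγ.ne' this
    have hp0 : (Real.pi : ℂ) ≠ 0 := by exact_mod_cast hpi.ne'
    have hd : ((s : ℂ) ^ 2 + (γ : ℂ) ^ 2) = - ((γ - s * Complex.I) * (-γ - s * Complex.I)) := by
      linear_combination (s : ℂ) ^ 2 * Complex.I_sq
    push_cast
    rw [hd, ha, hb]
    simp only [mul_zero, Complex.exp_zero]
    field_simp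
    ring
  constructor
  · have h0 := key 0
    rw [← integrableOn_univ, ← Set.Iic_union_Ioi (a := (0 : ℝ))]
    simpa using h0.1.union h0.2.1
  · funext s
    rw [Real.fourier_real_eq_integral_exp_smul]
    exact (key s).2.2

lemma lapAux_meas (γ : ℝ) :
    Measurable fun s : ℝ => ENNReal.ofReal (γ / (Real.pi * (s ^ 2 + γ ^ 2))) := by
  fun_prop

lemma lapAux_integrable (γ : ℝ) (hγ : 0 < γ) :
    Integrable fun s : ℝ => γ / (Real.pi * (s ^ 2 + γ ^ 2)) := by
  have h := ProbabilityTheory.integrable_cauchyPDFReal 0 (γ := ⟨γ, hγ.le⟩)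
  refine h.congr (Filter.Eventually.of_forall fun s => ?_)
  have e : ProbabilityTheory.cauchyPDFReal 0 ⟨γ, hγ.le⟩ s =
      Real.pi⁻¹ * γ * ((s - 0) ^ 2 + γ ^ 2)⁻¹ := rfl
  rw [e, sub_zero]
  field_simp

lemma lapAux_charFun (γ : ℝ) (hγ : 0 < γ) (t : ℝ) :
    ∫ s, Complex.exp (↑(s * t) * Complex.I) ∂(cauchyMeasure γ) =
      ((Real.exp (-γ * |t|) : ℝ) : ℂ) := by
  have hpi := Real.pi_pos
  obtain ⟨h1, h2⟩ := lapAux_fourier γ hγ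
  have h3 := Continuous.fourierInv_fourier_eq (by fun_prop) h1
    (by rw [h2]; exact (lapAux_integrable γ hγ).ofReal)
  rw [h2] at h3
  have h4 := congrFun h3 (t / (2 * Real.pi))
  rw [Real.fourierInv_eq'] at h4
  rw [cauchyMeasure, integral_withDensity_eq_integral_toReal_smul (lapAux_meas γ)
    (Filter.Eventually.of_forall fun _ => ENNReal.ofReal_lt_top)]
  convert h4 using 1
  · refine integral_congr_ae (Filter.Eventually.of_forall fun s => ?_)
    have hn : 0 ≤ γ / (Real.pi * (s ^ 2 + γ ^ 2)) := by positivity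
    have he : 2 * Real.pi * inner ℝ s (t / (2 * Real.pi)) = s * t := by
      simp
      field_simp
    simp only [ENNReal.toReal_ofReal hn, he, Complex.real_smul, smul_eq_mul]
    ring
  · rw [abs_div, abs_of_pos (by positivity : 0 < 2 * Real.pi)]
    congr 2
    field_simp

lemma lapAux_cauchy_prob (γ : ℝ) (hγ : 0 < γ) : IsProbabilityMeasure (cauchyMeasure γ) := by
  have hfin : IsFiniteMeasure (cauchyMeasure γ) :=
    isFiniteMeasure_withDensity_ofReal (lapAux_integrable γ hγ).2
  have h := lapAux_charFun γ hγ 0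
  simp only [mul_zero, Complex.ofReal_zero, zero_mul, Complex.exp_zero, abs_zero, Real.exp_zero,
    integral_const, Complex.ofReal_one, Complex.real_smul, mul_one] at h
  have h' : (cauchyMeasure γ).real Set.univ = 1 := by exact_mod_cast h
  exact ⟨by rwa [measureReal_def, ENNReal.toReal_eq_one_iff] at h'⟩

lemma lapAux_unif_prob : IsProbabilityMeasure uniformPhase := by
  constructor
  have hpi := Real.pi_pos
  simp only [uniformPhase, Measure.smul_apply, Measure.restrict_apply_univ, Real.volume_Icc,
    sub_zero, smul_eq_mul]
  exact ENNReal.inv_mul_cancel (by simpa using hpi) ENNReal.ofReal_ne_top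

lemma lapAux_cos (N : ℕ) (γ : ℝ) (hγ : 0 < γ) (z : Fin N → ℝ) :
    ∫ w, Real.cos (∑ k, w k * z k) ∂(Measure.pi fun _ : Fin N => cauchyMeasure γ) =
      Real.exp (-γ * ∑ k, |z k|) := by
  have := lapAux_cauchy_prob γ hγ
  have hint : Integrable (fun w : Fin N → ℝ => Complex.exp (↑(∑ k, w k * z k) * Complex.I))
      (Measure.pi fun _ : Fin N => cauchyMeasure γ) := by
    refine Integrable.of_bound (C := 1) (Measurable.aestronglyMeasurable (by fun_prop)) ?_
    exact Filter.Eventually.of_forall fun w => (Complex.norm_exp_ofReal_mul_I _).le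
  have h : ∫ w : Fin N → ℝ, Complex.exp (↑(∑ k, w k * z k) * Complex.I)
      ∂(Measure.pi fun _ : Fin N => cauchyMeasure γ) =
      ((Real.exp (-γ * ∑ k, |z k|) : ℝ) : ℂ) := by
    have h1 : ∀ w : Fin N → ℝ, Complex.exp (↑(∑ k, w k * z k) * Complex.I) =
        ∏ k, Complex.exp (↑(w k * z k) * Complex.I) := by
      intro w
      rw [← Complex.exp_sum, ← Finset.sum_mul, Complex.ofReal_sum]
    simp_rw [h1]
    rw [integral_fintype_prod_eq_prod (fun k s => Complex.exp (↑(s * z k) * Complex.I))]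
    simp_rw [lapAux_charFun γ hγ]
    rw [← Complex.ofReal_prod, ← Real.exp_sum, Finset.mul_sum]
  have h2 := integral_re hint
  rw [h] at h2
  simp only [RCLike.re_to_complex, Complex.exp_ofReal_mul_I_re, Complex.ofReal_re] at h2
  exact h2


/-- Random Fourier features with independent Cauchy frequencies of scale `α⁻¹` and
independent uniform phases on `[0, 2π]` (joint law the product measure) give an
unbiased estimator of the Laplacian kernel: for all `x, y ∈ ℝ^N`,
`E[⟨φ(x), φ(y)⟩] = exp(−‖x−y‖₁/α)`. -/
theorem lapFeature_expectation_inner (N D : ℕ) (hD : 1 ≤ D) (α : ℝ) (hα : 0 < α)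
    (x y : Fin N → ℝ) :
    ∫ p : (Fin D → Fin N → ℝ) × (Fin D → ℝ),
        (∑ q : Fin D × Fin 2, lapFeature N D p.1 p.2 x q * lapFeature N D p.1 p.2 y q)
        ∂((Measure.pi fun _ : Fin D =>
              Measure.pi fun _ : Fin N => cauchyMeasure α⁻¹).prod
            (Measure.pi fun _ : Fin D => uniformPhase))
      = Real.exp (-(∑ k, |x k - y k|) / α) := by
  have hγ : 0 < α⁻¹ := inv_pos.2 hα
  have := lapAux_cauchy_prob α⁻¹ hγ
  have := lapAux_unif_prob
  have hD0 : (D : ℝ) ≠ 0 := by positivity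
  have hs : ∀ p : (Fin D → Fin N → ℝ) × (Fin D → ℝ),
      (∑ q : Fin D × Fin 2, lapFeature N D p.1 p.2 x q * lapFeature N D p.1 p.2 y q) =
      (fun w : Fin D → Fin N → ℝ =>
        ∑ j, (1 / (D : ℝ)) * Real.cos (∑ k, w j k * (x k - y k))) p.1 := by
    intro p
    rw [Fintype.sum_prod_type]
    refine Finset.sum_congr rfl fun j _ => ?_
    have h1 : ∑ k, p.1 j k * (x k - y k) =
        ((∑ k, p.1 j k * x k) + p.2 j) - ((∑ k, p.1 j k * y k) + p.2 j) := by
      simp only [mul_sub, Finset.sum_sub_distrib]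
      ring
    have h2 : (1 / (D : ℝ)) = (1 / Real.sqrt D) * (1 / Real.sqrt D) := by
      rw [div_mul_div_comm, Real.mul_self_sqrt (Nat.cast_nonneg D), one_mul]
    rw [h1, Real.cos_sub, h2]
    simp only [Fin.sum_univ_two, lapFeature]
    simp only [if_true, one_ne_zero, if_false]
    ring
  rw [integral_congr_ae (Filter.Eventually.of_forall hs)]
  refine (integral_fun_fst (fun w : Fin D → Fin N → ℝ =>
        ∑ j, (1 / (D : ℝ)) * Real.cos (∑ k, w j k * (x k - y k)))).trans ?_
  rw [probReal_univ, one_smul, integral_finsetSum]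
  · have hj : ∀ j : Fin D, ∫ w : Fin D → Fin N → ℝ,
        (1 / (D : ℝ)) * Real.cos (∑ k, w j k * (x k - y k)) ∂(Measure.pi fun _ : Fin D =>
              Measure.pi fun _ : Fin N => cauchyMeasure α⁻¹) =
        (1 / (D : ℝ)) * Real.exp (-(∑ k, |x k - y k|) / α) := by
      intro j
      rw [integral_const_mul, integral_comp_eval (i := j)
        (μ := fun _ : Fin D => Measure.pi fun _ : Fin N => cauchyMeasure α⁻¹)
        (f := fun v : Fin N → ℝ => Real.cos (∑ k, v k * (x k - y k)))
        (Measurable.aestronglyMeasurable (by fun_prop)), lapAux_cos N α⁻¹ hγ]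
      congr 2
      field_simp
    simp_rw [hj]
    simp
    field_simp
  · intro j _
    refine Integrable.of_bound (C := |1 / (D : ℝ)|)
      (Measurable.aestronglyMeasurable (by fun_prop)) ?_
    refine Filter.Eventually.of_forall fun w => ?_
    rw [Real.norm_eq_abs, abs_mul]
    exact mul_le_of_le_one_right (abs_nonneg _) (Real.abs_cos_le_one _)
end
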